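/- arXiv:1705.10115 — 2 statements merged into one kernel-verified Lean document; each statement's English description precedes it below -/
import Mathlib

section
/- Let φ₁ and φ₂ be sentences of relational first-order logic with equality and let Σ be a signature. If for every first-order sentence ψ with sig(ψ) ⊆ Σ it holds that φ₂ ⊨ ψ implies φ₁ ⊨ ψ (i.e., φ₁ FO(Σ)-entails φ₂), then for every first-order sentence ψ with sig(ψ) ∩ sig(φ₂) ⊆ Σ it holds that φ₂ ⊨ ψ implies φ₁ ⊨ ψ (i.e., φ₁ strongly FO(Σ)-entails φ₂). (This is the instance for full first-order logic of: in any fragment enjoying Craig interpolation, Σ-entailment implies strong Σ-entailment; it follows using the Craig interpolation theorem for first-order logic.) -/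
/-! Core: relational first-order logic with equality, without function symbols
or constants, over an arbitrary signature of predicates with arities. -/

namespace FOG

/-- a relational vocabulary: predicate symbols with arities -/
structure Sig where
  Pred : Type
  ar : Pred → ℕ

/-- first-order formulas (with block quantifiers and `ℕ`-indexed variables) -/
inductive Fml (σ : Sig) : Type
  | rel (p : σ.Pred) (ts : Fin (σ.ar p) → ℕ)
  | eqv (i j : ℕ)
  | fls
  | neg (φ : Fml σ)
  | conj (φ ψ : Fml σ)
  | disj (φ ψ : Fml σ)
  | impl (φ ψ : Fml σ)
  | all (vs : List ℕ) (φ : Fml σ)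
  | ex (vs : List ℕ) (φ : Fml σ)

namespace Fml

variable {σ : Sig}

def free : Fml σ → Set ℕ
  | rel _ ts => Set.range ts
  | eqv i j => {i, j}
  | fls => ∅
  | neg φ => φ.free
  | conj φ ψ => φ.free ∪ ψ.free
  | disj φ ψ => φ.free ∪ ψ.free
  | impl φ ψ => φ.free ∪ ψ.free
  | all vs φ => φ.free \ {i | i ∈ vs}
  | ex vs φ => φ.free \ {i | i ∈ vs}

def IsSentence (φ : Fml σ) : Prop := φ.free = ∅

/-- the predicates occurring in a formula (equality is a logical symbol and
never part of a signature) -/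
def sig : Fml σ → Set σ.Pred
  | rel p _ => {p}
  | eqv _ _ => ∅
  | fls => ∅
  | neg φ => φ.sig
  | conj φ ψ => φ.sig ∪ ψ.sig
  | disj φ ψ => φ.sig ∪ ψ.sig
  | impl φ ψ => φ.sig ∪ ψ.sig
  | all _ φ => φ.sig
  | ex _ φ => φ.sig

def IsAtom : Fml σ → Prop
  | rel _ _ => True
  | eqv _ _ => True
  | _ => False

end Fml

structure Str (σ : Sig) where
  Dom : Type
  nonempty : Nonempty Dom
  rel : (p : σ.Pred) → (Fin (σ.ar p) → Dom) → Prop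

def Sat {σ : Sig} (A : Str σ) : Fml σ → (ℕ → A.Dom) → Prop
  | .rel p ts, v => A.rel p (fun i => v (ts i))
  | .eqv i j, v => v i = v j
  | .fls, _ => False
  | .neg φ, v => ¬ Sat A φ v
  | .conj φ ψ, v => Sat A φ v ∧ Sat A ψ v
  | .disj φ ψ, v => Sat A φ v ∨ Sat A ψ v
  | .impl φ ψ, v => Sat A φ v → Sat A ψ v
  | .all vs φ, v => ∀ v' : ℕ → A.Dom, (∀ i, i ∉ vs → v' i = v i) → Sat A φ v'
  | .ex vs φ, v => ∃ v' : ℕ → A.Dom, (∀ i, i ∉ vs → v' i = v i) ∧ Sat A φ v'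

def SatS {σ : Sig} (A : Str σ) (φ : Fml σ) : Prop := ∀ v, Sat A φ v

def Entails {σ : Sig} (φ ψ : Fml σ) : Prop := ∀ A : Str σ, SatS A φ → SatS A ψ

def Satisfiable {σ : Sig} (φ : Fml σ) : Prop := ∃ A : Str σ, SatS A φ

/-- The guarded fragment GF: quantification only in the patterns
`∀ȳ (α(x̄,ȳ) → φ(x̄,ȳ))` and `∃ȳ (α(x̄,ȳ) ∧ φ(x̄,ȳ))`, where the guard `α` is an
atomic formula containing all the variables of `x̄,ȳ`. -/
inductive IsGF {σ : Sig} : Fml σ → Prop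
  | rel (p : σ.Pred) (ts : Fin (σ.ar p) → ℕ) : IsGF (.rel p ts)
  | eqv (i j : ℕ) : IsGF (.eqv i j)
  | fls : IsGF .fls
  | neg {φ} : IsGF φ → IsGF (.neg φ)
  | conj {φ ψ} : IsGF φ → IsGF ψ → IsGF (.conj φ ψ)
  | disj {φ ψ} : IsGF φ → IsGF ψ → IsGF (.disj φ ψ)
  | impl {φ ψ} : IsGF φ → IsGF ψ → IsGF (.impl φ ψ)
  | allG {vs : List ℕ} {α φ : Fml σ} :
      α.IsAtom → IsGF φ → φ.free ∪ {i | i ∈ vs} ⊆ α.free →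
      IsGF (.all vs (.impl α φ))
  | exG {vs : List ℕ} {α φ : Fml σ} :
      α.IsAtom → IsGF φ → φ.free ∪ {i | i ∈ vs} ⊆ α.free →
      IsGF (.ex vs (.conj α φ))

/-- `φ₁` GF(Σ)-entails `φ₂` -/
def GFEntails {σ : Sig} (Sg : Set σ.Pred) (φ₁ φ₂ : Fml σ) : Prop :=
  ∀ ψ : Fml σ, IsGF ψ → ψ.IsSentence → ψ.sig ⊆ Sg →
    Entails φ₂ ψ → Entails φ₁ ψ

/-- `φ₁` strongly GF(Σ)-entails `φ₂` -/
def StrongGFEntails {σ : Sig} (Sg : Set σ.Pred) (φ₁ φ₂ : Fml σ) : Prop :=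
  ∀ Sg' : Set σ.Pred, Sg'.Finite → Sg' ∩ φ₂.sig ⊆ Sg → GFEntails Sg' φ₁ φ₂

end FOG

/-!
An interpolant `χ` of `φ₂` and `ψ` uses only predicates of `sig φ₂ ∩ sig ψ ⊆ Σ`, so `φ₂ ⊨ χ` gives
`φ₁ ⊨ χ`, and `χ ⊨ ψ` gives `φ₁ ⊨ ψ`.

For Craig interpolation, suppose that `φ ⊨ ψ` has no interpolant. Then no formula over the common
signature separates `φ` from `¬ψ`. Adding Henkin axioms whose witnesses are fresh variables keeps
the two sides inseparable, because the fresh variables can be quantified away in a separating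
formula; by the Rasiowa–Sikorski lemma all the required axioms can be added to both sides. Two
inseparable theories extend to inseparable ultrafilters of interpretations, which therefore agree
on every formula over the common signature. The variables modulo provable equality then carry one
structure that obeys both ultrafilters, and it satisfies `φ` and `¬ψ`.
-/

namespace FOG

section Interpolation

open Filter

variable {σ : Sig}

namespace Fml

theorem finite_free (φ : Fml σ) : φ.free.Finite := by
  induction φ with
  | rel p ts => exact Set.finite_range ts
  | all vs φ ih => exact ih.subset Set.sdiff_subset
  | ex vs φ ih => exact ih.subset Set.sdiff_subset
  | _ => simp_all [free]

theorem eventually_image_free_subset_Iio (φ : Fml σ) (ρ : ℕ → ℕ) :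
    ∀ᶠ N in atTop, ρ '' φ.free ⊆ Set.Iio N :=
  (eventually_all_finite (φ.finite_free.image ρ)).2 fun i _ => eventually_gt_atTop i

/-- The universal closure of a formula. -/
noncomputable def closure (φ : Fml σ) : Fml σ :=
  .all φ.finite_free.toFinset.toList φ

theorem isSentence_closure (φ : Fml σ) : φ.closure.IsSentence := by
  simp [closure, IsSentence, free]

end Fml

section Coincidence

variable {A : Str σ} {S : Set ℕ} {vs : List ℕ} {v w v' : ℕ → A.Dom}

theorem exists_eqOn_of_eqOn_sdiff (h : ∀ i ∈ S \ {i | i ∈ vs}, v i = w i)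
    (hv' : ∀ i, i ∉ vs → v' i = v i) :
    ∃ w' : ℕ → A.Dom, (∀ i, i ∉ vs → w' i = w i) ∧ ∀ i ∈ S, v' i = w' i := by
  refine ⟨fun i => if i ∈ vs then v' i else w i, fun i hi => if_neg hi, fun i hi => ?_⟩
  by_cases hvs : i ∈ vs
  · exact (if_pos hvs).symm
  · exact ((hv' i hvs).trans (h i ⟨hi, hvs⟩)).trans (if_neg hvs).symm

theorem dependsOn_sat (A : Str σ) (φ : Fml σ) : DependsOn (Sat A φ) φ.free := by
  induction φ with
  | rel p ts =>
    intro v w h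
    exact congrArg (A.rel p) (funext fun i => h _ ⟨i, rfl⟩)
  | eqv i j =>
    intro v w h
    simp only [Sat, h i (.inl rfl), h j (.inr rfl)]
  | fls => exact fun _ _ _ => rfl
  | neg φ ih => exact fun v w h => congrArg Not (ih h)
  | conj φ ψ ihφ ihψ | disj φ ψ ihφ ihψ | impl φ ψ ihφ ihψ =>
    intro v w h
    simp only [Sat, ihφ fun i hi => h i (.inl hi), ihψ fun i hi => h i (.inr hi)]
  | all vs φ ih =>
    have transfer {v w : ℕ → A.Dom} (h : ∀ i ∈ (Fml.all vs φ).free, v i = w i)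
        (hv : Sat A (.all vs φ) v) : Sat A (.all vs φ) w := by
      intro w' hw'
      obtain ⟨v', hv', hw'v'⟩ := exists_eqOn_of_eqOn_sdiff (fun i hi => (h i hi).symm) hw'
      exact (ih hw'v').mpr (hv v' hv')
    exact fun v w h => propext ⟨transfer h, transfer fun i hi => (h i hi).symm⟩
  | ex vs φ ih =>
    have transfer {v w : ℕ → A.Dom} (h : ∀ i ∈ (Fml.ex vs φ).free, v i = w i) :
        Sat A (.ex vs φ) v → Sat A (.ex vs φ) w := by
      rintro ⟨v', hv', hsat⟩
      obtain ⟨w', hw', hv'w'⟩ := exists_eqOn_of_eqOn_sdiff h hv'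
      exact ⟨w', hw', (ih hv'w').mp hsat⟩
    exact fun v w h => propext ⟨transfer h, transfer fun i hi => (h i hi).symm⟩

theorem sat_closure_iff (φ : Fml σ) : Sat A φ.closure v ↔ SatS A φ := by
  refine ⟨fun h w => ?_, fun h w _ => h w⟩
  obtain ⟨v', hv', hwv'⟩ :=
    exists_eqOn_of_eqOn_sdiff (S := φ.free) (vs := φ.finite_free.toFinset.toList) (w := v)
      (fun i hi => by simp at hi) (fun i _ => rfl : ∀ i, _ → w i = w i)
  exact (dependsOn_sat A φ hwv').mpr (h v' hv')

end Coincidence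

/-- A structure together with a valuation of the variables. A set of interpretations plays the
role of a formula up to equivalence, and a filter the role of a deductively closed theory. -/
structure Interp (σ : Sig) where
  str : Str σ
  val : ℕ → str.Dom

/-- The interpretations satisfying a formula. -/
def Fml.models (φ : Fml σ) : Set (Interp σ) := {I | Sat I.str φ I.val}

/-- Membership in the set `α` of interpretations depends only on the variables `i < N`. -/
def SupportedBelow (N : ℕ) (α : Set (Interp σ)) : Prop :=
  ∀ A : Str σ, DependsOn (fun v : ℕ → A.Dom => (⟨A, v⟩ : Interp σ) ∈ α) (Set.Iio N)

/-- Membership in the set `α` of interpretations depends only on finitely many variables. -/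
def FinitelySupported (α : Set (Interp σ)) : Prop :=
  ∀ᶠ N in atTop, SupportedBelow N α

section Support

variable {α β : Set (Interp σ)}

theorem FinitelySupported.inter (hα : FinitelySupported α) (hβ : FinitelySupported β) :
    FinitelySupported (α ∩ β) := by
  filter_upwards [hα, hβ] with N hα hβ A v w h
  exact congrArg₂ And (hα A h) (hβ A h)

theorem finitelySupported_sat (φ : Fml σ) (ρ : ℕ → ℕ) :
    FinitelySupported {I : Interp σ | Sat I.str φ (I.val ∘ ρ)} := by
  filter_upwards [φ.eventually_image_free_subset_Iio ρ] with N hN A v w h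
  exact dependsOn_sat A φ fun i hi => h (ρ i) (hN ⟨i, hi, rfl⟩)

theorem finitelySupported_models (φ : Fml σ) : FinitelySupported φ.models :=
  finitelySupported_sat φ id

end Support

/-- The filters `l` and `m` are inseparable over the signature `C` if no formula over `C` belongs
to the theory `l` while its negation belongs to `m`. -/
def SigInseparable (C : Set σ.Pred) (l m : Filter (Interp σ)) : Prop :=
  ∀ χ : Fml σ, χ.sig ⊆ C → (∀ᶠ I in l, I ∈ χ.models) → ∃ᶠ I in m, I ∈ χ.models

/-- The filter generated by the formulas over `C` that belong to the theory `l`. -/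
def sigTheory (C : Set σ.Pred) (l : Filter (Interp σ)) : Filter (Interp σ) where
  sets := {s | ∃ χ : Fml σ, χ.sig ⊆ C ∧ χ.models ∈ l ∧ χ.models ⊆ s}
  univ_sets := ⟨.neg .fls, Set.empty_subset C, univ_mem' fun _ => id, Set.subset_univ _⟩
  sets_of_superset := by
    rintro s t ⟨χ, hC, hl, hs⟩ hst
    exact ⟨χ, hC, hl, hs.trans hst⟩
  inter_sets := by
    rintro s t ⟨χ, hC, hl, hs⟩ ⟨χ', hC', hl', ht⟩
    exact ⟨.conj χ χ', Set.union_subset hC hC', inter_mem hl hl', Set.inter_subset_inter hs ht⟩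

namespace SigInseparable

variable {C : Set σ.Pred} {l m : Filter (Interp σ)}

theorem symm (h : SigInseparable C l m) : SigInseparable C m l := by
  intro χ hC hm hl
  exact h (.neg χ) hC hl (hm.mono fun I => not_not_intro)

theorem neBot_sigTheory_inf (h : SigInseparable C l m) : (sigTheory C l ⊓ m).NeBot := by
  rw [inf_neBot_iff_frequently_left]
  rintro p ⟨χ, hC, hl, hp⟩
  exact (h χ hC hl).mono fun I hI => hp hI

theorem exists_ultrafilter_right (h : SigInseparable C l m) :
    ∃ V : Ultrafilter (Interp σ), ↑V ≤ m ∧ SigInseparable C l V := by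
  have := h.neBot_sigTheory_inf
  obtain ⟨hVtheory, hVm⟩ := le_inf_iff.1 (Ultrafilter.of_le (sigTheory C l ⊓ m))
  exact ⟨_, hVm, fun χ hC hl => Eventually.frequently (hVtheory ⟨χ, hC, hl, subset_rfl⟩)⟩

theorem exists_ultrafilters (h : SigInseparable C l m) :
    ∃ U V : Ultrafilter (Interp σ), ↑U ≤ l ∧ ↑V ≤ m ∧ SigInseparable C U V := by
  obtain ⟨V, hV, hlV⟩ := h.exists_ultrafilter_right
  obtain ⟨U, hU, hVU⟩ := hlV.symm.exists_ultrafilter_right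
  exact ⟨U, V, hU, hV, hVU.symm⟩

theorem eventually_models_iff {U V : Ultrafilter (Interp σ)} (h : SigInseparable C U V)
    {χ : Fml σ} (hχ : χ.sig ⊆ C) :
    (∀ᶠ I in U, I ∈ χ.models) ↔ ∀ᶠ I in V, I ∈ χ.models :=
  ⟨fun hU => Ultrafilter.frequently_iff_eventually.1 (h χ hχ hU),
    fun hV => Ultrafilter.frequently_iff_eventually.1 (h.symm χ hχ hV)⟩

-- A consequence `χ` of `α ∩ W` gives the consequence `∃ fresh, χ` of `α`, and `β` does not depend
-- on the quantified variables.
theorem inter_left {N : ℕ} {α β W : Set (Interp σ)} {fresh : List ℕ}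
    (h : SigInseparable C (𝓟 α) (𝓟 β)) (hα : SupportedBelow N α) (hβ : SupportedBelow N β)
    (hfresh : ∀ i < N, i ∉ fresh)
    (hW : ∀ (A : Str σ) (v : ℕ → A.Dom),
      ∃ v' : ℕ → A.Dom, (∀ i, i ∉ fresh → v' i = v i) ∧ ⟨A, v'⟩ ∈ W) :
    SigInseparable C (𝓟 (α ∩ W)) (𝓟 β) := by
  intro χ hC hχ
  have hex : ∀ I ∈ α, I ∈ (Fml.ex fresh χ).models := by
    rintro ⟨A, v⟩ hv
    obtain ⟨v', hv', hv'W⟩ := hW A v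
    exact ⟨v', hv', hχ ⟨(hα A fun i hi => hv' i (hfresh i hi)).mpr hv, hv'W⟩⟩
  obtain ⟨⟨A, v⟩, hv, v', hv', hsat⟩ := frequently_principal.1 (h (.ex fresh χ) hC hex)
  exact frequently_principal.2
    ⟨⟨A, v'⟩, (hβ A fun i hi => hv' i (hfresh i hi)).mpr hv, hsat⟩

end SigInseparable

section Witnesses

/-- The renaming `ρ`, except that the variables in `vs` go to fresh ones from `N` on. -/
def renew (vs : List ℕ) (N : ℕ) (ρ : ℕ → ℕ) (i : ℕ) : ℕ := if i ∈ vs then N + i else ρ i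

/-- The Henkin axiom: if `∃ vs, θ` holds under the renaming `ρ`, then the variables
`N + i` for `i ∈ vs` are witnesses. -/
def witnessAxiom (vs : List ℕ) (θ : Fml σ) (ρ : ℕ → ℕ) (N : ℕ) : Set (Interp σ) :=
  {I | Sat I.str (.ex vs θ) (I.val ∘ ρ) → Sat I.str θ (I.val ∘ renew vs N ρ)}

/-- The theory `l` contains a Henkin axiom for `∃ vs, θ` under every renaming, where
`x = (vs, θ)`. -/
def HasWitnesses (l : Filter (Interp σ)) (x : List ℕ × Fml σ) : Prop :=
  ∀ ρ : ℕ → ℕ, ∃ N, witnessAxiom x.1 x.2 ρ N ∈ l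

variable {vs : List ℕ} {θ : Fml σ} {ρ : ℕ → ℕ} {N : ℕ}

theorem HasWitnesses.mono {l m : Filter (Interp σ)} {x : List ℕ × Fml σ} (h : HasWitnesses l x)
    (hml : m ≤ l) : HasWitnesses m x :=
  fun ρ => (h ρ).imp fun _ hN => hml hN

theorem finitelySupported_witnessAxiom : FinitelySupported (witnessAxiom vs θ ρ N) := by
  filter_upwards [finitelySupported_sat (.ex vs θ) ρ, finitelySupported_sat θ (renew vs N ρ)]
    with K hex hθ A v w h
  exact implies_congr (hex A h) (hθ A h)

theorem witnessAxiom_congr {ρ' : ℕ → ℕ} (h : ∀ i ∈ θ.free, ρ i = ρ' i) :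
    witnessAxiom vs θ ρ N = witnessAxiom vs θ ρ' N := by
  ext I
  refine iff_of_eq (implies_congr (dependsOn_sat _ _ fun i hi => ?_)
    (dependsOn_sat _ _ fun i hi => ?_))
  · exact congrArg I.val (h i hi.1)
  · simp only [Function.comp_apply, renew, h i hi]

theorem notMem_map_add_of_lt {i : ℕ} (hi : i < N) : i ∉ vs.map (N + ·) := by
  intro hmem
  obtain ⟨j, -, rfl⟩ := List.mem_map.1 hmem
  omega

theorem exists_mem_witnessAxiom (hN : ρ '' (Fml.ex vs θ).free ⊆ Set.Iio N) (A : Str σ)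
    (v : ℕ → A.Dom) : ∃ v' : ℕ → A.Dom,
      (∀ i, i ∉ vs.map (N + ·) → v' i = v i) ∧ ⟨A, v'⟩ ∈ witnessAxiom vs θ ρ N := by
  by_cases hex : Sat A (.ex vs θ) (v ∘ ρ)
  · obtain ⟨w, hw, hθ⟩ := hex
    refine ⟨fun j => if j ∈ vs.map (N + ·) then w (j - N) else v j, fun i hi => if_neg hi,
      fun _ => (dependsOn_sat A θ fun i hi => ?_).mp hθ⟩
    by_cases hvs : i ∈ vs
    · simp [renew, hvs]
    · have hlt : ρ i < N := hN ⟨i, ⟨hi, hvs⟩, rfl⟩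
      have hold : ρ i ∉ vs.map (N + ·) := notMem_map_add_of_lt hlt
      simp only [Function.comp_apply, renew, if_neg hvs, if_neg hold, hw i hvs]
  · exact ⟨v, fun _ _ => rfl, fun h => (hex h).elim⟩

end Witnesses

/-- A forcing condition for the two-sided Henkin construction: a pair of finitely supported
inseparable sets of interpretations. -/
structure InseparablePair (C : Set σ.Pred) where
  left : Set (Interp σ)
  right : Set (Interp σ)
  finitelySupported_left : FinitelySupported left
  finitelySupported_right : FinitelySupported right
  sigInseparable : SigInseparable C (𝓟 left) (𝓟 right)

namespace InseparablePair

variable {C : Set σ.Pred}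

-- Stronger conditions are larger, as in `Order.idealOfCofinals`.
instance : Preorder (InseparablePair C) where
  le p q := q.left ⊆ p.left ∧ q.right ⊆ p.right
  le_refl _ := ⟨subset_rfl, subset_rfl⟩
  le_trans _ _ _ hpq hqr := ⟨hqr.1.trans hpq.1, hqr.2.trans hpq.2⟩

/-- The symmetry of the forcing notion that exchanges the two sides. -/
def swap (p : InseparablePair C) : InseparablePair C where
  left := p.right
  right := p.left
  finitelySupported_left := p.finitelySupported_right
  finitelySupported_right := p.finitelySupported_left
  sigInseparable := p.sigInseparable.symm

theorem exists_le_left_subset_witnessAxiom (p : InseparablePair C) (vs : List ℕ) (θ : Fml σ)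
    (ρ : ℕ → ℕ) : ∃ q, p ≤ q ∧ ∃ N, q.left ⊆ witnessAxiom vs θ ρ N := by
  obtain ⟨N, ⟨hleft, hright⟩, hρ⟩ :=
    ((p.finitelySupported_left.and p.finitelySupported_right).and
      ((Fml.ex vs θ).eventually_image_free_subset_Iio ρ)).exists
  refine ⟨⟨p.left ∩ witnessAxiom vs θ ρ N, p.right,
    p.finitelySupported_left.inter finitelySupported_witnessAxiom, p.finitelySupported_right,
    p.sigInseparable.inter_left hleft hright (fun _ => notMem_map_add_of_lt)
      (exists_mem_witnessAxiom hρ)⟩,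
    ⟨Set.inter_subset_left, subset_rfl⟩, N, Set.inter_subset_right⟩

/-- The conditions forcing witnesses for `∃ vs, θ` under the renaming `ρ` on both sides. -/
def witnessed (C : Set σ.Pred) (vs : List ℕ) (θ : Fml σ) (ρ : ℕ → ℕ) :
    Order.Cofinal (InseparablePair C) where
  carrier := {p | (∃ N, p.left ⊆ witnessAxiom vs θ ρ N) ∧ ∃ N, p.right ⊆ witnessAxiom vs θ ρ N}
  isCofinal p := by
    obtain ⟨q, hpq, N, hN⟩ := p.exists_le_left_subset_witnessAxiom vs θ ρ
    obtain ⟨r, hqr, hr⟩ := q.swap.exists_le_left_subset_witnessAxiom vs θ ρ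
    exact ⟨r.swap, ⟨⟨N, hqr.2.trans hN⟩, hr⟩, hpq.trans ⟨hqr.2, hqr.1⟩⟩

/-- The theory accumulated on the left by an ideal of conditions. -/
def leftFilter (G : Order.Ideal (InseparablePair C)) : Filter (Interp σ) := ⨅ p ∈ G, 𝓟 p.left

/-- The theory accumulated on the right by an ideal of conditions. -/
def rightFilter (G : Order.Ideal (InseparablePair C)) : Filter (Interp σ) := ⨅ p ∈ G, 𝓟 p.right

variable {G : Order.Ideal (InseparablePair C)}

theorem mem_leftFilter {s : Set (Interp σ)} : s ∈ leftFilter G ↔ ∃ p ∈ G, p.left ⊆ s :=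
  mem_biInf_of_directed (s := (G : Set (InseparablePair C)))
    (G.directed.mono fun _ _ h => principal_mono.2 h.1) G.nonempty

theorem mem_rightFilter {s : Set (Interp σ)} : s ∈ rightFilter G ↔ ∃ p ∈ G, p.right ⊆ s :=
  mem_biInf_of_directed (s := (G : Set (InseparablePair C)))
    (G.directed.mono fun _ _ h => principal_mono.2 h.2) G.nonempty

theorem sigInseparable_filters (G : Order.Ideal (InseparablePair C)) :
    SigInseparable C (leftFilter G) (rightFilter G) := by
  intro χ hC hleft hright
  obtain ⟨p, hpG, hp⟩ := mem_leftFilter.1 hleft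
  obtain ⟨q, hqG, hq⟩ := mem_rightFilter.1 hright
  obtain ⟨r, -, hpr, hqr⟩ := G.directed p hpG q hqG
  exact r.sigInseparable χ hC (hpr.1.trans hp) (hqr.2.trans hq)

end InseparablePair

theorem exists_finsupp_eqOn {s : Set ℕ} (hs : s.Finite) (ρ : ℕ → ℕ) :
    ∃ f : ℕ →₀ ℕ, ∀ i ∈ s, f i = ρ i :=
  ⟨.indicator hs.toFinset fun i _ => ρ i,
    fun _ hi => Finsupp.indicator_of_mem (hs.mem_toFinset.2 hi) _⟩

open InseparablePair in
theorem SigInseparable.exists_ultrafilters_hasWitnesses {C : Set σ.Pred} {α β : Set (Interp σ)}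
    (h : SigInseparable C (𝓟 α) (𝓟 β)) (hα : FinitelySupported α) (hβ : FinitelySupported β)
    {Q : Set (List ℕ × Fml σ)} (hQ : Q.Countable) :
    ∃ U V : Ultrafilter (Interp σ), α ∈ U ∧ β ∈ V ∧ SigInseparable C U V ∧
      ∀ x ∈ Q, HasWitnesses U x ∧ HasWitnesses V x := by
  have := hQ.to_subtype
  have := Encodable.ofCountable (Q × (ℕ →₀ ℕ))
  let start : InseparablePair C := ⟨α, β, hα, hβ, h⟩
  let requirement (t : Q × (ℕ →₀ ℕ)) := witnessed C t.1.1.1 t.1.1.2 t.2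
  let G := Order.idealOfCofinals start requirement
  have hstart : start ∈ G := Order.mem_idealOfCofinals _ _
  obtain ⟨U, V, hU, hV, hUV⟩ := (sigInseparable_filters G).exists_ultrafilters
  refine ⟨U, V, hU (mem_leftFilter.2 ⟨start, hstart, subset_rfl⟩),
    hV (mem_rightFilter.2 ⟨start, hstart, subset_rfl⟩), hUV, fun x hx => ?_⟩
  suffices HasWitnesses (leftFilter G) x ∧ HasWitnesses (rightFilter G) x from
    ⟨this.1.mono hU, this.2.mono hV⟩
  rw [HasWitnesses, HasWitnesses, ← forall_and]
  intro ρ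
  obtain ⟨f, hf⟩ := exists_finsupp_eqOn x.2.finite_free ρ
  obtain ⟨p, ⟨⟨N, hN⟩, K, hK⟩, hpG⟩ :=
    Order.cofinal_meets_idealOfCofinals start requirement (⟨x, hx⟩, f)
  rw [witnessAxiom_congr hf] at hN hK
  exact ⟨⟨N, mem_leftFilter.2 ⟨p, hpG, hN⟩⟩, K, mem_rightFilter.2 ⟨p, hpG, hK⟩⟩

/-- The elements of `M` are named by the variables through `q`, and `M` satisfies exactly those
equations, and those atomic formulas over the signature `S`, that belong to the theory `l`. -/
structure IsCanonicalModel (l : Filter (Interp σ)) (S : Set σ.Pred) (M : Str σ)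
    (q : ℕ → M.Dom) : Prop where
  surjective : Function.Surjective q
  eq_iff : ∀ i j, q i = q j ↔ ∀ᶠ I in l, I.val i = I.val j
  rel_iff : ∀ p ∈ S, ∀ ts, M.rel p (q ∘ ts) ↔ ∀ᶠ I in l, I.str.rel p (I.val ∘ ts)

/-- The pairs `(vs, θ)` such that the truth of the formula in a canonical model depends on
witnesses for `∃ vs, θ`. -/
def Fml.witnessPairs : Fml σ → Set (List ℕ × Fml σ)
  | rel _ _ | eqv _ _ | fls => ∅
  | neg φ => φ.witnessPairs
  | conj φ ψ | disj φ ψ | impl φ ψ => φ.witnessPairs ∪ ψ.witnessPairs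
  | all vs φ => insert (vs, .neg φ) φ.witnessPairs
  | ex vs φ => insert (vs, φ) φ.witnessPairs

theorem Fml.finite_witnessPairs (φ : Fml σ) : φ.witnessPairs.Finite := by
  induction φ <;> simp_all [witnessPairs]

namespace IsCanonicalModel

variable {S : Set σ.Pred} {M : Str σ} {q : ℕ → M.Dom}

theorem sat_ex_iff {l : Filter (Interp σ)} (hM : IsCanonicalModel l S M q) {vs : List ℕ}
    {θ : Fml σ} (hw : HasWitnesses l (vs, θ))
    (hθ : ∀ ρ : ℕ → ℕ, Sat M θ (q ∘ ρ) ↔ ∀ᶠ I in l, Sat I.str θ (I.val ∘ ρ)) (ρ : ℕ → ℕ) :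
    Sat M (.ex vs θ) (q ∘ ρ) ↔ ∀ᶠ I in l, Sat I.str (.ex vs θ) (I.val ∘ ρ) := by
  constructor
  · rintro ⟨v, hv, hsat⟩
    obtain ⟨name, hname⟩ := hM.surjective.hasRightInverse
    let ρ' : ℕ → ℕ := fun i => if i ∈ vs then name (v i) else ρ i
    have hρ' : ∀ i, i ∉ vs → ρ' i = ρ i := fun i hi => if_neg hi
    have hqρ' : q ∘ ρ' = v := by
      funext i
      by_cases hi : i ∈ vs
      · simp [ρ', hi, hname (v i)]
      · simp [ρ', hi, hv i hi]
    rw [← hqρ', hθ] at hsat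
    exact hsat.mono fun I hI => ⟨I.val ∘ ρ', fun i hi => congrArg I.val (hρ' i hi), hI⟩
  · intro hex
    obtain ⟨N, hN⟩ := hw ρ
    have hsat : ∀ᶠ I in l, Sat I.str θ (I.val ∘ renew vs N ρ) := hex.mp hN
    exact ⟨q ∘ renew vs N ρ, fun i hi => congrArg q (if_neg hi), (hθ _).2 hsat⟩

theorem sat_iff {U : Ultrafilter (Interp σ)} (hM : IsCanonicalModel U S M q) (φ : Fml σ)
    (hS : φ.sig ⊆ S) (hw : ∀ x ∈ φ.witnessPairs, HasWitnesses U x) (ρ : ℕ → ℕ) :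
    Sat M φ (q ∘ ρ) ↔ ∀ᶠ I : Interp σ in U, Sat I.str φ (I.val ∘ ρ) := by
  induction φ generalizing ρ with
  | rel p ts => exact hM.rel_iff p (hS rfl) (ρ ∘ ts)
  | eqv i j => exact hM.eq_iff (ρ i) (ρ j)
  | fls => simp [Sat, U.neBot.ne]
  | neg φ ih => simp only [Sat, ih hS hw, Ultrafilter.eventually_not]
  | conj φ ψ ihφ ihψ | disj φ ψ ihφ ihψ | impl φ ψ ihφ ihψ =>
    obtain ⟨hSφ, hSψ⟩ := Set.union_subset_iff.1 hS
    simp only [Sat, ihφ hSφ fun x hx => hw x (.inl hx), ihψ hSψ fun x hx => hw x (.inr hx),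
      eventually_and, Ultrafilter.eventually_or, Ultrafilter.eventually_imp]
  | all vs φ ih =>
    have ihφ := ih hS fun x hx => hw x (.inr hx)
    have all_iff_not_ex {A : Str σ} {v : ℕ → A.Dom} :
        Sat A (.all vs φ) v ↔ ¬ Sat A (.ex vs (.neg φ)) v := by
      simp only [Sat, not_exists, not_and, not_not]
    simp only [all_iff_not_ex, Ultrafilter.eventually_not]
    exact not_congr (hM.sat_ex_iff (hw _ (.inl rfl))
      (fun ρ => by simp only [Sat, ihφ, Ultrafilter.eventually_not]) ρ)
  | ex vs φ ih =>
    exact hM.sat_ex_iff (hw _ (.inl rfl)) (ih hS fun x hx => hw x (.inr hx)) ρ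

end IsCanonicalModel

/-- Variables are identified when the theory `l` proves them equal. -/
def varSetoid (l : Filter (Interp σ)) : Setoid ℕ where
  r i j := ∀ᶠ I in l, I.val i = I.val j
  iseqv :=
    { refl := fun _ => .of_forall fun _ => rfl
      symm := fun h => h.mono fun _ => Eq.symm
      trans := fun h h' => by filter_upwards [h, h'] with I hij hjk using hij.trans hjk }

theorem eventually_rel_of_eventually_eq {l : Filter (Interp σ)} {p : σ.Pred}
    {ts us : Fin (σ.ar p) → ℕ} (heq : ∀ k, ∀ᶠ I in l, I.val (ts k) = I.val (us k))
    (h : ∀ᶠ I in l, I.str.rel p (I.val ∘ ts)) : ∀ᶠ I in l, I.str.rel p (I.val ∘ us) := by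
  filter_upwards [eventually_all.2 heq, h] with I hI hts
  exact (congrArg (I.str.rel p) (funext hI)).mp hts

/-- The variables modulo provable equality in `l`, where the predicates in `S` are interpreted
according to `l` and those in `T` according to `m`. -/
def amalgam (l m : Filter (Interp σ)) (S T : Set σ.Pred) : Str σ where
  Dom := Quotient (varSetoid l)
  nonempty := ⟨Quotient.mk _ 0⟩
  rel p x := ∃ ts : Fin (σ.ar p) → ℕ, Quotient.mk _ ∘ ts = x ∧
    (p ∈ S ∧ (∀ᶠ I in l, I.str.rel p (I.val ∘ ts)) ∨
      p ∈ T ∧ ∀ᶠ I in m, I.str.rel p (I.val ∘ ts))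

namespace SigInseparable

variable {S T : Set σ.Pred} {U V : Ultrafilter (Interp σ)}

theorem eventually_rel_iff (h : SigInseparable (S ∩ T) U V) {p : σ.Pred} (hS : p ∈ S)
    (hT : p ∈ T) (ts : Fin (σ.ar p) → ℕ) :
    (∀ᶠ I : Interp σ in U, I.str.rel p (I.val ∘ ts)) ↔
      ∀ᶠ I : Interp σ in V, I.str.rel p (I.val ∘ ts) :=
  h.eventually_models_iff (χ := .rel p ts) (Set.singleton_subset_iff.2 ⟨hS, hT⟩)

theorem isCanonicalModel_amalgam_left (h : SigInseparable (S ∩ T) U V) :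
    IsCanonicalModel U S (amalgam U V S T) (Quotient.mk _) where
  surjective := Quotient.mk_surjective
  eq_iff _ _ := Quotient.eq
  rel_iff p hS ts := by
    refine ⟨?_, fun hts => ⟨ts, rfl, .inl ⟨hS, hts⟩⟩⟩
    rintro ⟨us, hus, hrel⟩
    refine eventually_rel_of_eventually_eq (fun k => Quotient.eq.1 (congrFun hus k)) ?_
    exact hrel.elim And.right fun ⟨hT, hV⟩ => (h.eventually_rel_iff hS hT us).2 hV

theorem isCanonicalModel_amalgam_right (h : SigInseparable (S ∩ T) U V) :
    IsCanonicalModel V T (amalgam U V S T) (Quotient.mk _) := by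
  have eq_iff (i j : ℕ) : (Quotient.mk (varSetoid (U : Filter (Interp σ))) i = Quotient.mk _ j) ↔
      ∀ᶠ I : Interp σ in V, I.val i = I.val j :=
    Quotient.eq.trans (h.eventually_models_iff (χ := .eqv i j) (Set.empty_subset _))
  refine ⟨Quotient.mk_surjective, eq_iff, fun p hT ts =>
    ⟨?_, fun hts => ⟨ts, rfl, .inr ⟨hT, hts⟩⟩⟩⟩
  rintro ⟨us, hus, hrel⟩
  refine eventually_rel_of_eventually_eq (fun k => (eq_iff _ _).1 (congrFun hus k)) ?_
  exact hrel.elim (fun ⟨hS, hU⟩ => (h.eventually_rel_iff hS hT us).1 hU) And.right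

end SigInseparable

theorem nonempty_models_inter_of_sigInseparable {φ ψ : Fml σ}
    (h : SigInseparable (φ.sig ∩ ψ.sig) (𝓟 φ.models) (𝓟 ψ.models)) :
    (φ.models ∩ ψ.models).Nonempty := by
  obtain ⟨U, V, hφU, hψV, hUV, hw⟩ := h.exists_ultrafilters_hasWitnesses
    (finitelySupported_models φ) (finitelySupported_models ψ)
    (φ.finite_witnessPairs.union ψ.finite_witnessPairs).countable
  have hφ := (hUV.isCanonicalModel_amalgam_left.sat_iff φ subset_rfl
    (fun x hx => (hw x (.inl hx)).1) id).2 hφU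
  have hψ := (hUV.isCanonicalModel_amalgam_right.sat_iff ψ subset_rfl
    (fun x hx => (hw x (.inr hx)).2) id).2 hψV
  exact ⟨⟨_, _⟩, hφ, hψ⟩

theorem exists_models_interpolant {φ ψ : Fml σ} (h : φ.models ⊆ ψ.models) :
    ∃ χ : Fml σ, χ.sig ⊆ φ.sig ∩ ψ.sig ∧ φ.models ⊆ χ.models ∧ χ.models ⊆ ψ.models := by
  by_contra! hnone
  have hinsep : SigInseparable (φ.sig ∩ (Fml.neg ψ).sig) (𝓟 φ.models) (𝓟 (Fml.neg ψ).models) := by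
    intro χ hC hφχ
    obtain ⟨I, hχ, hψ⟩ := Set.not_subset.1 (hnone χ hC hφχ)
    exact frequently_principal.2 ⟨I, hψ, hχ⟩
  obtain ⟨I, hφ, hψ⟩ := nonempty_models_inter_of_sigInseparable hinsep
  exact hψ (h hφ)

theorem craig_interpolation {φ ψ : Fml σ} (h : Entails φ ψ) :
    ∃ χ : Fml σ, χ.IsSentence ∧ χ.sig ⊆ φ.sig ∩ ψ.sig ∧ Entails φ χ ∧ Entails χ ψ := by
  have hmodels : φ.closure.models ⊆ ψ.models :=
    fun I hI => h I.str ((sat_closure_iff φ).1 hI) I.val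
  obtain ⟨χ, hsig, hφχ, hχψ⟩ := exists_models_interpolant hmodels
  refine ⟨χ.closure, χ.isSentence_closure, hsig, fun A hA v => ?_, fun A hA v => ?_⟩
  · exact (sat_closure_iff χ).2 fun w => @hφχ ⟨A, w⟩ ((sat_closure_iff φ).2 hA)
  · exact @hχψ ⟨A, v⟩ ((sat_closure_iff χ).1 (hA v) v)

theorem Entails.trans {φ ψ χ : Fml σ} (h : Entails φ ψ) (h' : Entails ψ χ) : Entails φ χ :=
  fun A hA => h' A (h A hA)

theorem fo_entailment_implies_strong_fo_entailment_general (Sg : Set σ.Pred) (φ₁ φ₂ : Fml σ)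
    (hent : ∀ ψ : Fml σ, ψ.IsSentence → ψ.sig ⊆ Sg → Entails φ₂ ψ → Entails φ₁ ψ)
    (ψ : Fml σ) (hψ : ψ.sig ∩ φ₂.sig ⊆ Sg) (h : Entails φ₂ ψ) : Entails φ₁ ψ := by
  obtain ⟨χ, hχ, hsig, hφ₂χ, hχψ⟩ := craig_interpolation h
  have hχSg : χ.sig ⊆ Sg := fun p hp => hψ (hsig hp).symm
  exact (hent χ hχ hχSg hφ₂χ).trans hχψ

end Interpolation

/-- In first-order logic, FO(Σ)-entailment implies strong
FO(Σ)-entailment (a consequence of the Craig interpolation theorem). -/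
theorem fo_entailment_implies_strong_fo_entailment
    {σ : Sig} (Sg : Set σ.Pred) (hSg : Sg.Finite) (φ₁ φ₂ : Fml σ)
    (h1 : φ₁.IsSentence) (h2 : φ₂.IsSentence)
    (hent : ∀ ψ : Fml σ, ψ.IsSentence → ψ.sig ⊆ Sg →
        Entails φ₂ ψ → Entails φ₁ ψ) :
    ∀ ψ : Fml σ, ψ.IsSentence → ψ.sig ∩ φ₂.sig ⊆ Sg →
        Entails φ₂ ψ → Entails φ₁ ψ := by
  exact fun ψ _ => fo_entailment_implies_strong_fo_entailment_general Sg φ₁ φ₂ hent ψ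

end FOG
end

section
/- Let 𝒜 = (Q,Θ,q₀,δ,Ω) be a two-way alternating tree automaton (2ATA). If L(𝒜) ≠ ∅, then there is a Θ-labeled tree (T,L) ∈ L(𝒜) such that the outdegree of T is bounded by |Q|, the number of states of 𝒜. -/
/-! Core: two-way alternating parity tree automata (2ATAs) on finitely
branching labeled trees. -/

namespace TA

/-- nodes: words over `ℕ ∖ {0}`; the successors of `w` are the `w ++ [i]` -/
abbrev Node : Type := List ℕ+

/-- a tree: a nonempty, prefix-closed, finitely branching set of nodes -/
def IsTree (T : Set Node) : Prop :=
  T.Nonempty ∧ (∀ w ∈ T, ∀ v : Node, v <+: w → v ∈ T) ∧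
    ∀ w ∈ T, {i : ℕ+ | w ++ [i] ∈ T}.Finite

/-- positive Boolean formulas over `α` -/
inductive PosBool (α : Type) : Type
  | tt
  | ff
  | var (a : α)
  | and (f g : PosBool α)
  | or (f g : PosBool α)

def PosBool.eval {α : Type} (v : α → Prop) : PosBool α → Prop
  | .tt => True
  | .ff => False
  | .var a => v a
  | .and f g => f.eval v ∧ g.eval v
  | .or f g => f.eval v ∨ g.eval v

/-- the transitions of a 2ATA: `q` (stay), `⟨−⟩q` (predecessor, required to
exist), `[−]q` (predecessor, if it exists), `◇q` (some successor),
`□q` (every successor) -/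
inductive Move (Q : Type) : Type
  | here (q : Q)
  | up (q : Q)
  | upOpt (q : Q)
  | dia (q : Q)
  | box (q : Q)

/-- a two-way alternating tree automaton (2ATA); the state set `Q` is assumed
finite where relevant -/
structure ATA (Q Θ : Type) where
  init : Q
  δ : Q → Θ → PosBool (Move Q)
  prio : Q → ℕ

/-- a run of the 2ATA `A` on the `Θ`-labeled tree `(T, Lab)`: a
`(T × Q)`-labeled tree `(Tr, r)` -/
structure IsRun {Q Θ : Type} (A : ATA Q Θ) (T : Set Node) (Lab : Node → Θ)
    (Tr : Set Node) (r : Node → Node × Q) : Prop where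
  tree : IsTree Tr
  root : r [] = ([], A.init)
  inT : ∀ y ∈ Tr, (r y).1 ∈ T
  step : ∀ y ∈ Tr, ∃ v : Move Q → Prop,
    (A.δ (r y).2 (Lab (r y).1)).eval v ∧
    (∀ p, v (.here p) →
      ∃ i : ℕ+, y ++ [i] ∈ Tr ∧ r (y ++ [i]) = ((r y).1, p)) ∧
    (∀ p, v (.up p) → (r y).1 ≠ [] ∧
      ∃ i : ℕ+, y ++ [i] ∈ Tr ∧ r (y ++ [i]) = ((r y).1.dropLast, p)) ∧
    (∀ p, v (.upOpt p) → (r y).1 = [] ∨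
      ∃ i : ℕ+, y ++ [i] ∈ Tr ∧ r (y ++ [i]) = ((r y).1.dropLast, p)) ∧
    (∀ p, v (.dia p) → ∃ j : ℕ+, (r y).1 ++ [j] ∈ T ∧
      ∃ i : ℕ+, y ++ [i] ∈ Tr ∧ r (y ++ [i]) = ((r y).1 ++ [j], p)) ∧
    (∀ p, v (.box p) → ∀ j : ℕ+, (r y).1 ++ [j] ∈ T →
      ∃ i : ℕ+, y ++ [i] ∈ Tr ∧ r (y ++ [i]) = ((r y).1 ++ [j], p))

/-- an infinite path through the run tree, starting at its root -/
def IsRunPath (Tr : Set Node) (π : ℕ → Node) : Prop :=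
  π 0 = [] ∧ ∀ n, π (n + 1) ∈ Tr ∧ ∃ i : ℕ+, π (n + 1) = π n ++ [i]

/-- the parity condition: the largest priority occurring infinitely often
along the sequence of states is even -/
def ParityAcc {Q : Type} (prio : Q → ℕ) (qs : ℕ → Q) : Prop :=
  ∃ m : ℕ, Even m ∧ {j | prio (qs j) = m}.Infinite ∧
    ∀ m', m < m' → {j | prio (qs j) = m'}.Finite

/-- the 2ATA `A` accepts the `Θ`-labeled tree `(T, Lab)` -/
def Accepts {Q Θ : Type} (A : ATA Q Θ) (T : Set Node) (Lab : Node → Θ) : Prop :=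
  ∃ (Tr : Set Node) (r : Node → Node × Q), IsRun A T Lab Tr r ∧
    ∀ π : ℕ → Node, IsRunPath Tr π → ParityAcc A.prio (fun n => (r (π n)).2)

/-- `(T, Lab) ∈ L(A)` -/
def InLang {Q Θ : Type} (A : ATA Q Θ) (T : Set Node) (Lab : Node → Θ) : Prop :=
  IsTree T ∧ Accepts A T Lab

/-- `w·i` for `i ∈ ℤ` : `w·0 = w`, `w·(−1)` is the predecessor of `w`
(undefined at the root), `w·i = w ++ [i]` for `i ≥ 1` -/
def moveZ (x : Node) (i : ℤ) : Option Node :=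
  if i = 0 then some x
  else if i = -1 then (if x = [] then none else some x.dropLast)
  else if h : 0 < i then some (x ++ [⟨i.toNat, by omega⟩]) else none

end TA

namespace TA

/-!
Label the nodes of an accepting run with signatures: for each priority `k` an ordinal that bounds
how often `k`, when odd, can still be seen before a larger priority, the tuple being ordered
lexicographically with the highest priority first. Along every edge of the run, the part of the
signature belonging to priorities at least the current one does not increase, and it decreases if
the current priority is odd; conversely this descent forces the parity condition.

Replacing the signature of a run node by the least signature of all run nodes at the same position
`(x, q)` makes the run positional. Now `◇q` at `x` can always be served by the one child of `x` for
which the signature of `q` is least, whatever the state at `x`. Hence each node needs to keep at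
most one child per state.
-/

open Filter

lemma exists_forall_mem_le {α β : Type*} [Nonempty α] [LinearOrder β] [WellFoundedLT β]
    (s : Set α) (f : α → β) : ∃ a, ∀ b ∈ s, a ∈ s ∧ f a ≤ f b := by
  rcases s.eq_empty_or_nonempty with rfl | hs
  · exact ⟨Classical.arbitrary α, by simp⟩
  · exact ⟨Function.argminOn f s hs, fun b hb =>
      ⟨Function.argminOn_mem f s hs, Function.argminOn_le f s hb⟩⟩

lemma not_frequently_lt_of_eventually_le {α : Type*} [Preorder α] [WellFoundedLT α] {a : ℕ → α}
    (hle : ∀ᶠ n in atTop, a (n + 1) ≤ a n) : ¬ ∃ᶠ n in atTop, a (n + 1) < a n := by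
  obtain ⟨n₀, hn₀⟩ := eventually_atTop.1 hle
  have hanti : Antitone fun n => a (n₀ + n) :=
    antitone_nat_of_succ_le fun n => hn₀ (n₀ + n) (Nat.le_add_right _ _)
  obtain ⟨b, ⟨l, rfl⟩, hmin⟩ := (wellFounded_lt (α := α)).has_min
    (Set.range fun n => a (n₀ + n)) (Set.range_nonempty _)
  refine not_frequently.2 (eventually_atTop.2 ⟨n₀ + l, fun n hn hlt => ?_⟩)
  obtain ⟨d, rfl⟩ : ∃ d, n = n₀ + (l + d) := ⟨n - (n₀ + l), by lia⟩
  exact hmin _ ⟨l + d + 1, rfl⟩ (hlt.trans_le (hanti (Nat.le_add_right l d)))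

lemma exists_eventually_le_and_frequently_eq {c : ℕ → ℕ} {N : ℕ} (hN : ∀ n, c n ≤ N) :
    ∃ m, (∀ᶠ n in atTop, c n ≤ m) ∧ ∃ᶠ n in atTop, c n = m := by
  classical
  have hex : ∃ m, ∀ᶠ n in atTop, c n ≤ m := ⟨N, .of_forall hN⟩
  refine ⟨Nat.find hex, Nat.find_spec hex, fun hne => ?_⟩
  have hlt : ∀ᶠ n in atTop, c n < Nat.find hex :=
    (Nat.find_spec hex).and hne |>.mono fun n hn => lt_of_le_of_ne hn.1 hn.2
  obtain ⟨n, hn⟩ := hlt.exists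
  exact Nat.find_min hex (Nat.sub_one_lt (Nat.ne_zero_of_lt hn))
    (hlt.mono fun n hn => Nat.le_sub_one_of_lt hn)

lemma parityAcc_iff_even {Q : Type} {prio : Q → ℕ} {qs : ℕ → Q} {m : ℕ}
    (hle : ∀ᶠ n in atTop, prio (qs n) ≤ m) (hfreq : ∃ᶠ n in atTop, prio (qs n) = m) :
    ParityAcc prio qs ↔ Even m := by
  have hfin : ∀ m', m < m' → {j | prio (qs j) = m'}.Finite := fun m' hm' => by
    refine Set.not_infinite.1 fun hinf => ?_
    obtain ⟨n, hn, hn'⟩ := ((Nat.frequently_atTop_iff_infinite.2 hinf).and_eventually hle).exists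
    omega
  refine ⟨?_, fun hm => ⟨m, hm, Nat.frequently_atTop_iff_infinite.1 hfreq, hfin⟩⟩
  rintro ⟨l, hl, hlinf, hlfin⟩
  rcases lt_trichotomy l m with hlm | rfl | hml
  · exact absurd (hlfin m hlm) (Nat.frequently_atTop_iff_infinite.1 hfreq)
  · exact hl
  · exact absurd (hfin l hml) hlinf

/-! ### Trees -/

namespace IsTree

variable {T : Set Node}

lemma mem_of_prefix (hT : IsTree T) {v w : Node} (hw : w ∈ T) (hv : v <+: w) : v ∈ T :=
  hT.2.1 w hw v hv

lemma nil_mem (hT : IsTree T) : [] ∈ T := hT.1.elim fun _ hw => hT.mem_of_prefix hw List.nil_prefix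

lemma mem_of_isRunPath (hT : IsTree T) {π : ℕ → Node} (hπ : IsRunPath T π) : ∀ n, π n ∈ T
  | 0 => hπ.1 ▸ hT.nil_mem
  | n + 1 => (hπ.2 n).1

end IsTree

/-- The tree in which the directions available at a node `u` are those in `I u`. -/
def treeOf (I : Node → Set ℕ+) : Set Node :=
  {w | ∀ (u : Node) (i : ℕ+), u ++ [i] <+: w → i ∈ I u}

section treeOf

variable {I : Node → Set ℕ+}

lemma nil_mem_treeOf : [] ∈ treeOf I := fun u i h => by simp at h

lemma mem_treeOf_of_prefix {v w : Node} (hw : w ∈ treeOf I) (hv : v <+: w) : v ∈ treeOf I :=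
  fun u i h => hw u i (h.trans hv)

lemma concat_mem_treeOf_iff {w : Node} {i : ℕ+} :
    w ++ [i] ∈ treeOf I ↔ w ∈ treeOf I ∧ i ∈ I w := by
  refine ⟨fun h => ⟨mem_treeOf_of_prefix h (List.prefix_append _ _), h w i List.prefix_rfl⟩, ?_⟩
  rintro ⟨hw, hi⟩ u j h
  rcases List.prefix_concat_iff.1 h with heq | hprefix
  · obtain ⟨rfl, hji⟩ := List.append_inj' heq rfl
    exact List.singleton_inj.1 hji ▸ hi
  · exact hw u j hprefix

lemma isTree_treeOf (hI : ∀ u, (I u).Finite) : IsTree (treeOf I) :=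
  ⟨⟨[], nil_mem_treeOf⟩, fun _ hw _ hv => mem_treeOf_of_prefix hw hv,
    fun w _ => (hI w).subset fun _ hi => (concat_mem_treeOf_iff.1 hi).2⟩

end treeOf

lemma exists_unravelling {P : Type*} (E : P → P → Prop) (hE : ∀ p, {t | E p t}.Finite) (p₀ : P) :
    ∃ (Tr : Set Node) (pos : Node → P), IsTree Tr ∧ pos [] = p₀ ∧
      ∀ y ∈ Tr, ∀ t, E (pos y) t ↔ ∃ i : ℕ+, y ++ [i] ∈ Tr ∧ pos (y ++ [i]) = t := by
  have henum : ∀ p, ∃ (I : Set ℕ+) (d : ℕ+ → P), I.Finite ∧ d '' I = {t | E p t} := fun p => by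
    have : Nonempty P := ⟨p⟩
    obtain ⟨f, hf⟩ := Set.countable_iff_exists_injOn.1 (hE p).countable
    have hinj : Set.InjOn (Nat.succPNat ∘ f) {t | E p t} := Nat.succPNat_injective.comp_injOn hf
    exact ⟨_, _, (hE p).image _, hinj.leftInvOn_invFunOn.image_image⟩
  choose I d hI hd using henum
  let pos : Node → P := List.foldl d p₀
  have hpos : ∀ y i, pos (y ++ [i]) = d (pos y) i := fun y i => by simp [pos]
  refine ⟨treeOf (I ∘ pos), pos, isTree_treeOf fun u => hI (pos u), rfl, fun y hy t => ?_⟩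
  change t ∈ {t | E (pos y) t} ↔ _
  simp only [← hd, Set.mem_image, concat_mem_treeOf_iff, hy, true_and, hpos, Function.comp_apply]

lemma exists_isRunPath_of_chain {T : Set Node} (hT : IsTree T) {f : ℕ → Node}
    (hmem : ∀ n, f n ∈ T) (hprefix : ∀ n, f n <+: f (n + 1))
    (hlen : StrictMono fun n => (f n).length) :
    ∃ π, IsRunPath T π ∧ ∀ n v, v <+: f n → π v.length = v := by
  have hchain : ∀ {m n}, m ≤ n → f m <+: f n := fun {m n} h => by
    induction n, h using Nat.le_induction with
    | base => exact List.prefix_rfl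
    | succ n _ ih => exact ih.trans (hprefix n)
  have hπ : ∀ n v, v <+: f n → (f v.length).take v.length = v := fun n v hv => by
    have hv' : v <+: f (max n v.length) := hv.trans (hchain (le_max_left _ _))
    have hf : f v.length <+: f (max n v.length) := hchain (le_max_right _ _)
    exact (List.prefix_iff_eq_take.1 (List.prefix_of_prefix_length_le hv' hf hlen.le_apply)).symm
  refine ⟨fun n => (f n).take n, ⟨by simp, fun n => ⟨?_, ?_⟩⟩, hπ⟩
  · exact hT.mem_of_prefix (hmem _) (List.take_prefix _ _)
  · have hn : n < (f (n + 1)).length := hlen.le_apply (x := n + 1)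
    have htake := hπ (n + 1) ((f (n + 1)).take n) (List.take_prefix _ _)
    rw [List.length_take_of_le hn.le] at htake
    exact ⟨(f (n + 1))[n], htake ▸ (List.take_concat_get' _ _ hn).symm⟩

lemma exists_prefix_between_of_chain {f : ℕ → Node} (hprefix : ∀ n, f n <+: f (n + 1))
    (hlen : StrictMono fun n => (f n).length) {j : ℕ} (hj : (f 0).length ≤ j) :
    ∃ n v, v.length = j ∧ f n <+: v ∧ v <+: f (n + 1) ∧ v ≠ f (n + 1) := by
  obtain ⟨n, hn, hn'⟩ := hlen.exists_between_of_tendsto_atTop hlen.tendsto_atTop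
    (Nat.lt_succ_of_le hj)
  have htake : ((f (n + 1)).take j).length = j := List.length_take_of_le (by lia)
  have htake_prefix : (f (n + 1)).take j <+: f (n + 1) := List.take_prefix _ _
  exact ⟨n, (f (n + 1)).take j, htake,
    List.prefix_of_prefix_length_le (hprefix n) htake_prefix (by lia), htake_prefix,
    fun heq => by rw [heq] at htake; lia⟩

/-! ### Ranks of nodes in accepting runs -/

/-- `ReachesPast Tr c k z y`: in the tree `Tr`, the node `z` is the child of a node `u` of priority
`k` such that all priorities from `y` down to `u` are at most `k`. The rank of this relation counts
the visits to `k` that can still occur below `y` before a larger priority. -/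
def ReachesPast (Tr : Set Node) (c : Node → ℕ) (k : ℕ) (z y : Node) : Prop :=
  z ∈ Tr ∧ ∃ u, (∃ i : ℕ+, z = u ++ [i]) ∧ y <+: u ∧ c u = k ∧ ∀ v, y <+: v → v <+: u → c v ≤ k

section Rank

variable {Tr : Set Node} {c : Node → ℕ} {k : ℕ}

lemma ReachesPast.of_child {y z : Node} {i : ℕ+} (hk : c y ≤ k)
    (h : ReachesPast Tr c k z (y ++ [i])) : ReachesPast Tr c k z y := by
  obtain ⟨hz, u, hzu, hyu, hu, hle⟩ := h
  refine ⟨hz, u, hzu, (List.prefix_append _ _).trans hyu, hu, fun v hyv hvu => ?_⟩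
  rcases lt_or_ge y.length v.length with hlt | hge
  · exact hle v (List.prefix_of_prefix_length_le hyu hvu (by simpa using hlt)) hvu
  · exact hyv.eq_of_length_le hge ▸ hk

lemma reachesPast_child {y : Node} {i : ℕ+} (hy : y ++ [i] ∈ Tr) (hk : c y = k) :
    ReachesPast Tr c k (y ++ [i]) y :=
  ⟨hy, y, ⟨i, rfl⟩, List.prefix_rfl, hk,
    fun _ hyv hvy => (hvy.eq_of_length_le hyv.length_le ▸ hk).le⟩

lemma wellFounded_reachesPast (hTr : IsTree Tr)
    (hacc : ∀ π, IsRunPath Tr π → ParityAcc c π) (hk : Odd k) :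
    WellFounded (ReachesPast Tr c k) := by
  refine wellFounded_iff_isEmpty_descending_chain.2 ⟨fun ⟨f, hf⟩ => ?_⟩
  choose hmem u hchild hfu hcu hle using hf
  choose i hi using hchild
  have huf : ∀ n, u n <+: f (n + 1) := fun n => hi n ▸ List.prefix_append _ _
  have hprefix : ∀ n, f n <+: f (n + 1) := fun n => (hfu n).trans (huf n)
  have hlen : StrictMono fun n => (f n).length := strictMono_nat_of_lt_succ fun n => by
    simpa [hi n] using Nat.lt_succ_of_le (hfu n).length_le
  obtain ⟨π, hπ, hπf⟩ := exists_isRunPath_of_chain hTr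
    (fun n => hTr.mem_of_prefix (hmem n) (hprefix n)) hprefix hlen
  have hbound : ∀ᶠ j in atTop, c (π j) ≤ k := by
    refine eventually_atTop.2 ⟨(f 0).length, fun j hj => ?_⟩
    obtain ⟨n, v, rfl, hfv, hvf, hne⟩ := exists_prefix_between_of_chain hprefix hlen hj
    rw [hπf _ v hvf]
    rw [hi n] at hvf hne
    exact hle n v hfv ((List.prefix_concat_iff.1 hvf).resolve_left hne)
  have hvisit : ∃ᶠ j in atTop, c (π j) = k := by
    refine frequently_atTop.2 fun n => ⟨(u n).length, ?_, by rw [hπf _ _ (huf n), hcu]⟩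
    exact hlen.le_apply.trans (hfu n).length_le
  exact Nat.not_even_iff_odd.2 hk ((parityAcc_iff_even hbound hvisit).1 (hacc π hπ))

lemma exists_rank (hTr : IsTree Tr) (hacc : ∀ π, IsRunPath Tr π → ParityAcc c π) (k : ℕ) :
    ∃ ρ : Node → Ordinal.{0}, ∀ y i, y ++ [i] ∈ Tr → c y ≤ k →
      ρ (y ++ [i]) ≤ ρ y ∧ (Odd k → c y = k → ρ (y ++ [i]) < ρ y) := by
  by_cases hk : Odd k
  · have : IsWellFounded Node (ReachesPast Tr c k) := ⟨wellFounded_reachesPast hTr hacc hk⟩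
    refine ⟨IsWellFounded.rank (ReachesPast Tr c k), fun y i hy hle => ⟨?_, fun _ heq =>
      IsWellFounded.rank_lt_of_rel (reachesPast_child hy heq)⟩⟩
    rw [IsWellFounded.rank_eq]
    exact Ordinal.iSup_le fun z =>
      Order.succ_le_of_lt (IsWellFounded.rank_lt_of_rel (z.2.of_child hle))
  · exact ⟨0, fun y i _ _ => ⟨le_rfl, fun hodd => absurd hodd hk⟩⟩

end Rank

/-! ### Signatures -/

/-- Signatures for priorities `0, …, N`: one ordinal per priority, compared lexicographically. The
index type is dualized so that the highest priority is the most significant. -/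
abbrev Signature (N : ℕ) : Type 1 := Lex ((Fin (N + 1))ᵒᵈ → Ordinal.{0})

section Signature

variable {N k : ℕ}

/-- The part of a signature that concerns priorities at least `k`, the other entries being erased
to `0`. -/
noncomputable def trunc (k : ℕ) (s : Signature N) : Signature N :=
  toLex fun i => if k ≤ i.ofDual then ofLex s i else 0

lemma trunc_mono : Monotone (trunc k : Signature N → Signature N) := by
  intro s t hst
  rcases hst.eq_or_lt with rfl | ⟨i, heq, hlt⟩
  · exact le_rfl
  by_cases hi : k ≤ i.ofDual
  · refine le_of_lt ⟨i, fun j hj => ?_, by simpa [trunc, hi] using hlt⟩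
    simp only [trunc, Pi.toLex_apply]
    exact if_congr Iff.rfl (heq j hj) rfl
  · refine le_of_eq (congrArg toLex (funext fun j => ?_))
    split_ifs with hj
    · exact heq j (OrderDual.ofDual_lt_ofDual.1 (Fin.lt_def.2 (by lia)))
    · rfl

lemma trunc_trunc {m : ℕ} (h : k ≤ m) (s : Signature N) : trunc m (trunc k s) = trunc m s := by
  refine congrArg toLex (funext fun i => ?_)
  split_ifs with hi
  · exact if_pos (h.trans hi)
  · rfl

/-- The condition on the signatures `s` and `t` of the two ends of an edge whose source has
priority `k`. -/
def Descends (k : ℕ) (s t : Signature N) : Prop :=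
  trunc k t ≤ trunc k s ∧ (Odd k → trunc k t < trunc k s)

lemma Descends.of_le {s t t' : Signature N} (h : Descends k s t) (ht : t' ≤ t) :
    Descends k s t' :=
  ⟨(trunc_mono ht).trans h.1, fun hk => (trunc_mono ht).trans_lt (h.2 hk)⟩

lemma parityAcc_of_descends {Q : Type} {prio : Q → ℕ} (hN : ∀ q, prio q ≤ N) {qs : ℕ → Q}
    {s : ℕ → Signature N} (hs : ∀ n, Descends (prio (qs n)) (s n) (s (n + 1))) :
    ParityAcc prio qs := by
  obtain ⟨m, hle, hfreq⟩ := exists_eventually_le_and_frequently_eq fun n => hN (qs n)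
  refine (parityAcc_iff_even hle hfreq).2 (Nat.not_odd_iff_even.1 fun hodd => ?_)
  have hdesc : ∀ᶠ n in atTop, trunc m (s (n + 1)) ≤ trunc m (s n) := hle.mono fun n hn => by
    simpa only [trunc_trunc hn] using trunc_mono (k := m) (hs n).1
  refine not_frequently_lt_of_eventually_le (a := fun n => trunc m (s n)) hdesc
    (hfreq.mono fun n hn => ?_)
  subst hn
  exact (hs n).2 hodd

lemma exists_signature {Tr : Set Node} {c : Node → ℕ} (hTr : IsTree Tr) (hN : ∀ y, c y ≤ N)
    (hacc : ∀ π, IsRunPath Tr π → ParityAcc c π) :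
    ∃ S : Node → Signature N, ∀ y i, y ++ [i] ∈ Tr → Descends (c y) (S y) (S (y ++ [i])) := by
  choose ρ hρ using exists_rank hTr hacc
  refine ⟨fun y => toLex fun i => ρ i.ofDual y, fun y i hy => ?_⟩
  have hle : (fun j : (Fin (N + 1))ᵒᵈ => if c y ≤ j.ofDual then ρ j.ofDual (y ++ [i]) else 0) ≤
      fun j => if c y ≤ j.ofDual then ρ j.ofDual y else 0 := fun j => by
    dsimp only
    split_ifs with hj
    · exact (hρ _ y i hy hj).1
    · exact le_rfl
  refine ⟨Pi.toLex_monotone hle, fun hodd => Pi.toLex_strictMono (Pi.lt_def.2 ⟨hle, ?_⟩)⟩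
  refine ⟨OrderDual.toDual ⟨c y, Nat.lt_succ_of_le (hN y)⟩, ?_⟩
  simpa using (hρ _ y i hy le_rfl).2 hodd rfl

end Signature

/-! ### Positional acceptance -/

variable {Q Θ : Type} {A : ATA Q Θ} {T T' : Set Node} {Lab : Node → Θ}

/-- The transition condition of a run at position `p = (x, q)`, where `F` is the set of positions to
which the run proceeds from `p`. -/
def Fulfils (A : ATA Q Θ) (T : Set Node) (Lab : Node → Θ) (p : Node × Q) (F : Set (Node × Q)) :
    Prop :=
  ∃ v : Move Q → Prop, (A.δ p.2 (Lab p.1)).eval v ∧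
    (∀ q, v (.here q) → (p.1, q) ∈ F) ∧
    (∀ q, v (.up q) → p.1 ≠ [] ∧ (p.1.dropLast, q) ∈ F) ∧
    (∀ q, v (.upOpt q) → p.1 = [] ∨ (p.1.dropLast, q) ∈ F) ∧
    (∀ q, v (.dia q) → ∃ j : ℕ+, p.1 ++ [j] ∈ T ∧ (p.1 ++ [j], q) ∈ F) ∧
    (∀ q, v (.box q) → ∀ j : ℕ+, p.1 ++ [j] ∈ T → (p.1 ++ [j], q) ∈ F)

/-- The nodes that an automaton at `x` can visit next: `x`, its predecessor (`[]` if `x = []`) and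
its successors in `T`. -/
def nextNodes (T : Set Node) (x : Node) : Set Node :=
  {x, x.dropLast} ∪ (fun j : ℕ+ => x ++ [j]) '' {j | x ++ [j] ∈ T}

lemma IsTree.finite_nextNodes (hT : IsTree T) {x : Node} (hx : x ∈ T) : (nextNodes T x).Finite :=
  (Set.toFinite _).union ((hT.2.2 x hx).image _)

lemma IsTree.nextNodes_subset (hT : IsTree T) {x : Node} (hx : x ∈ T) : nextNodes T x ⊆ T := by
  rintro _ ((rfl | rfl) | ⟨j, hj, rfl⟩)
  · exact hx
  · exact hT.mem_of_prefix hx (List.dropLast_prefix x)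
  · exact hj

namespace Fulfils

variable {p : Node × Q} {F G : Set (Node × Q)}

lemma of_subset (h : Fulfils A T Lab p F) (hT : T' ⊆ T)
    (hnext : ∀ t ∈ F, t.1 ∈ nextNodes T' p.1 → t ∈ G)
    (hdia : ∀ q j, p.1 ++ [j] ∈ T → (p.1 ++ [j], q) ∈ F →
      ∃ j', p.1 ++ [j'] ∈ T' ∧ (p.1 ++ [j'], q) ∈ G) :
    Fulfils A T' Lab p G := by
  obtain ⟨v, heval, hhere, hup, hupOpt, hdia', hbox⟩ := h
  have hstay : ∀ q, (p.1, q) ∈ F → (p.1, q) ∈ G := fun q h => hnext _ h (.inl (.inl rfl))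
  have hpred : ∀ q, (p.1.dropLast, q) ∈ F → (p.1.dropLast, q) ∈ G := fun q h =>
    hnext _ h (.inl (.inr rfl))
  refine ⟨v, heval, fun q hq => hstay q (hhere q hq), fun q hq => (hup q hq).imp_right (hpred q),
    fun q hq => (hupOpt q hq).imp_right (hpred q), fun q hq => ?_,
    fun q hq j hj => hnext _ (hbox q hq j (hT hj)) (.inr ⟨j, hj, rfl⟩)⟩
  obtain ⟨j, hj, hF⟩ := hdia' q hq
  exact hdia q j hj hF

lemma mono (h : Fulfils A T Lab p F) (hFG : F ⊆ G) : Fulfils A T Lab p G :=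
  h.of_subset subset_rfl (fun _ ht _ => hFG ht) fun _ j hj hF => ⟨j, hj, hFG hF⟩

lemma sep_nextNodes (h : Fulfils A T Lab p F) :
    Fulfils A T Lab p {t ∈ F | t.1 ∈ nextNodes T p.1} :=
  h.of_subset subset_rfl (fun _ ht ht' => ⟨ht, ht'⟩) fun _ j hj hF =>
    ⟨j, hj, hF, .inr ⟨j, hj, rfl⟩⟩

end Fulfils

/-- A certificate that `A` accepts `(T, Lab)` by a positional strategy: a set `D` of positions that
contains the initial one, and signatures `M` such that the transition condition at each position of
`D` can be met by moving to positions of `D` along which `M` descends. -/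
structure IsCertificate {N : ℕ} (A : ATA Q Θ) (T : Set Node) (Lab : Node → Θ)
    (D : Set (Node × Q)) (M : Node × Q → Signature N) : Prop where
  prio_le : ∀ q, A.prio q ≤ N
  init_mem : ([], A.init) ∈ D
  fst_mem : ∀ p ∈ D, p.1 ∈ T
  fulfils : ∀ p ∈ D, Fulfils A T Lab p {t ∈ D | Descends (A.prio p.2) (M p) (M t)}

lemma Accepts.exists_isCertificate [Finite Q] (h : Accepts A T Lab) :
    ∃ (N : ℕ) (D : Set (Node × Q)) (M : Node × Q → Signature N), IsCertificate A T Lab D M := by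
  obtain ⟨Tr, r, hrun, hacc⟩ := h
  obtain ⟨N, hN⟩ := (Set.finite_range A.prio).bddAbove
  have hprio : ∀ q, A.prio q ≤ N := fun q => hN ⟨q, rfl⟩
  obtain ⟨S, hS⟩ := exists_signature hrun.tree (fun y => hprio (r y).2) hacc
  choose y hy using fun p => exists_forall_mem_le {y | y ∈ Tr ∧ r y = p} S
  refine ⟨N, r '' Tr, S ∘ y, hprio, ⟨[], hrun.tree.nil_mem, hrun.root⟩,
    Set.forall_mem_image.2 hrun.inT, ?_⟩
  rintro p ⟨y₀, hy₀, hry₀⟩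
  obtain ⟨⟨hyTr, hry⟩, -⟩ := hy p y₀ ⟨hy₀, hry₀⟩
  have hstep : Fulfils A T Lab (r (y p)) {t | ∃ i : ℕ+, y p ++ [i] ∈ Tr ∧ r (y p ++ [i]) = t} :=
    hrun.step (y p) hyTr
  rw [hry] at hstep
  refine hstep.mono ?_
  rintro t ⟨i, hi, hrt⟩
  have hdesc := hS (y p) i hi
  rw [hry] at hdesc
  exact ⟨⟨_, hi, hrt⟩, hdesc.of_le (hy t _ ⟨hi, hrt⟩).2⟩

namespace IsCertificate

variable [Finite Q] {N : ℕ} {D : Set (Node × Q)} {M : Node × Q → Signature N}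

lemma accepts (h : IsCertificate A T Lab D M) (hT : IsTree T) : Accepts A T Lab := by
  let E : Node × Q → Node × Q → Prop := fun p t =>
    p ∈ D ∧ (t ∈ D ∧ Descends (A.prio p.2) (M p) (M t)) ∧ t.1 ∈ nextNodes T p.1
  have hE : ∀ p, {t | E p t}.Finite := fun p => by
    by_cases hp : p ∈ D
    · exact ((hT.finite_nextNodes (h.fst_mem p hp)).prod Set.finite_univ).subset
        fun t ht => ⟨ht.2.2, trivial⟩
    · simp [E, hp]
  obtain ⟨Tr, pos, hTr, hroot, hsucc⟩ := exists_unravelling E hE ([], A.init)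
  have hD : ∀ y ∈ Tr, pos y ∈ D := fun y hy => by
    rcases List.eq_nil_or_concat' y with rfl | ⟨u, i, rfl⟩
    · exact hroot ▸ h.init_mem
    · have hu : u ∈ Tr := hTr.mem_of_prefix hy (List.prefix_append _ _)
      exact ((hsucc u hu _).2 ⟨i, hy, rfl⟩).2.1.1
  refine ⟨Tr, pos, ⟨hTr, hroot, fun y hy => h.fst_mem _ (hD y hy), fun y hy => ?_⟩, fun π hπ => ?_⟩
  · exact (h.fulfils _ (hD y hy)).sep_nextNodes.mono fun t ht => (hsucc y hy t).1 ⟨hD y hy, ht⟩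
  · refine parityAcc_of_descends h.prio_le (s := fun n => M (pos (π n))) fun n => ?_
    obtain ⟨hmem, i, hi⟩ := hπ.2 n
    exact ((hsucc _ (hTr.mem_of_isRunPath hπ n) _).2 ⟨i, hi ▸ hmem, by rw [hi]⟩).2.1.2

lemma exists_subtree (h : IsCertificate A T Lab D M) (hT : IsTree T) :
    ∃ T' ⊆ T, IsTree T' ∧ (∀ w, {i : ℕ+ | w ++ [i] ∈ T'}.ncard ≤ Nat.card Q) ∧
      ∃ D' : Set (Node × Q), IsCertificate A T' Lab D' M := by
  choose σ hσ using fun x q =>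
    exists_forall_mem_le {j : ℕ+ | (x ++ [j], q) ∈ D} fun j => M (x ++ [j], q)
  let T' := treeOf fun x => Set.range (σ x) ∩ {j | x ++ [j] ∈ T}
  have hT' : IsTree T' := isTree_treeOf fun x => (Set.finite_range (σ x)).inter_of_left _
  have hsub : T' ⊆ T := fun w hw => by
    rcases List.eq_nil_or_concat' w with rfl | ⟨u, i, rfl⟩
    · exact hT.nil_mem
    · exact (concat_mem_treeOf_iff.1 hw).2.2
  refine ⟨T', hsub, hT', fun w => ?_, {p ∈ D | p.1 ∈ T'}, h.prio_le,
    ⟨h.init_mem, nil_mem_treeOf⟩, fun p hp => hp.2, fun p ⟨hpD, hpT'⟩ => ?_⟩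
  · calc {i : ℕ+ | w ++ [i] ∈ T'}.ncard
        ≤ (Set.range (σ w)).ncard := Set.ncard_le_ncard
          (fun i hi => (concat_mem_treeOf_iff.1 hi).2.1) (Set.finite_range _)
      _ ≤ Nat.card Q := Finite.card_range_le (σ w)
  · refine (h.fulfils p hpD).of_subset hsub ?_ ?_
    · exact fun t ht hnext => ⟨⟨ht.1, hT'.nextNodes_subset hpT' hnext⟩, ht.2⟩
    · rintro q j - ⟨hjD, hdesc⟩
      obtain ⟨hσD, hσle⟩ := hσ p.1 q j hjD
      have hσT' : p.1 ++ [σ p.1 q] ∈ T' :=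
        concat_mem_treeOf_iff.2 ⟨hpT', ⟨q, rfl⟩, h.fst_mem _ hσD⟩
      exact ⟨σ p.1 q, hσT', ⟨hσD, hσT'⟩, hdesc.of_le hσle⟩

end IsCertificate

theorem nonempty_lang_implies_bounded_outdegree_general [Finite Q] (h : InLang A T Lab) :
    ∃ T' ⊆ T, InLang A T' Lab ∧ ∀ w, {i : ℕ+ | w ++ [i] ∈ T'}.ncard ≤ Nat.card Q := by
  obtain ⟨hT, hacc⟩ := h
  obtain ⟨N, D, M, hcert⟩ := hacc.exists_isCertificate
  obtain ⟨T', hsub, hT', hcard, D', hcert'⟩ := hcert.exists_subtree hT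
  exact ⟨T', hsub, ⟨hT', hcert'.accepts hT'⟩, hcard⟩

/-- Lemma on bounded outdegree: if `L(𝒜) ≠ ∅` then `𝒜`
accepts a tree whose outdegree is bounded by the number of states of `𝒜`. -/
theorem nonempty_lang_implies_bounded_outdegree
    {Q Θ : Type} [Fintype Q] (A : ATA Q Θ)
    (h : ∃ (T : Set Node) (Lab : Node → Θ), InLang A T Lab) :
    ∃ (T : Set Node) (Lab : Node → Θ), InLang A T Lab ∧
      ∀ w ∈ T, {i : ℕ+ | w ++ [i] ∈ T}.ncard ≤ Fintype.card Q := by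
  obtain ⟨T, Lab, hT⟩ := h
  obtain ⟨T', -, hT', hcard⟩ := nonempty_lang_implies_bounded_outdegree_general hT
  exact ⟨T', Lab, hT', fun w _ => Nat.card_eq_fintype_card (α := Q) ▸ hcard w⟩

end TA
end
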